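/- Let C ⊆ 𝔽₂^n be a binary linear code, X uniform on C, and Y^ε the output of BEC(ε). Define the EXIT function g(ε) = (1/n)·∑_{i=1}^n H(X_i | Y^ε_{∼i}). Then g is differentiable on (0,1) with g'(ε) = (1/n)·∑_{i=1}^n ∑_{j≠i} I(X_i ; X_j | Y^ε_{∼i,j}). Moreover, if C is 1-transitive, then for every δ ∈ (0,1/2) and ε ∈ (0,1) with g(ε) ∈ (δ, 1−δ), g'(ε) ≥ (c(δ,ε)/n^{3/2})·∑_{i=1}^n ∑_{j≠i} α^ε_{ij}, where c(δ,ε) > 0 is bounded away from 0 when δ and ε are bounded away from 0 (and ε away from 1). -/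

import Mathlib

open scoped Classical
open Finset

noncomputable section

/-- Vectors in 𝔽₂^n (codewords and binary patterns). -/
abbrev Pattern (n : ℕ) := Fin n → ZMod 2

/-- Hamming weight. -/
def wH {n : ℕ} (x : Pattern n) : ℕ := hammingNorm x

/-- `z` covers `x` if the support of `x` is contained in the support of `z`. -/
def covers {n : ℕ} (z x : Pattern n) : Prop := ∀ k, x k ≠ 0 → z k ≠ 0

/-- Sample space: a codeword of C together with an erasure pattern (1 = erased). -/
abbrev Samp (n : ℕ) (C : Submodule (ZMod 2) (Pattern n)) := C × Pattern n

/-- Joint probability mass: X uniform on C, coordinates erased i.i.d. with prob. ε. -/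
def pmfP {n : ℕ} (C : Submodule (ZMod 2) (Pattern n)) (ε : ℝ) (ω : Samp n C) : ℝ :=
  (Nat.card C : ℝ)⁻¹ * ε ^ wH ω.2 * (1 - ε) ^ (n - wH ω.2)

/-- The BEC output Y: erased coordinates become `none`. -/
def Yout {n : ℕ} {C : Submodule (ZMod 2) (Pattern n)} (ω : Samp n C) :
    Fin n → Option (ZMod 2) :=
  fun k => if ω.2 k = 1 then none else some (ω.1.1 k)

/-- Y with coordinate i removed. -/
def Ynot {n : ℕ} {C : Submodule (ZMod 2) (Pattern n)} (i : Fin n) (ω : Samp n C) :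
    {k : Fin n // k ≠ i} → Option (ZMod 2) :=
  fun k => Yout ω k.1

/-- Y with coordinates i and j removed. -/
def Ynot2 {n : ℕ} {C : Submodule (ZMod 2) (Pattern n)} (i j : Fin n) (ω : Samp n C) :
    {k : Fin n // k ≠ i ∧ k ≠ j} → Option (ZMod 2) :=
  fun k => Yout ω k.1

/-- Probability of an event under a mass function p. -/
def prE {Ω : Type*} [Fintype Ω] (p : Ω → ℝ) (E : Set Ω) : ℝ :=
  ∑ ω ∈ univ.filter (· ∈ E), p ω

/-- Shannon entropy (in bits) of the random variable f under p. -/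
def entr {Ω A : Type*} [Fintype Ω] [Fintype A] (p : Ω → ℝ) (f : Ω → A) : ℝ :=
  -∑ a : A, prE p {ω | f ω = a} * Real.logb 2 (prE p {ω | f ω = a})

/-- Conditional Shannon entropy H(f | g) in bits. -/
def condEnt {Ω A B : Type*} [Fintype Ω] [Fintype A] [Fintype B]
    (p : Ω → ℝ) (f : Ω → A) (g : Ω → B) : ℝ :=
  -∑ a : A, ∑ b : B,
    prE p {ω | f ω = a ∧ g ω = b} *
      Real.logb 2 (prE p {ω | f ω = a ∧ g ω = b} / prE p {ω | g ω = b})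

/-- Mutual information I(f ; g) in bits. -/
def mutInf {Ω A B : Type*} [Fintype Ω] [Fintype A] [Fintype B]
    (p : Ω → ℝ) (f : Ω → A) (g : Ω → B) : ℝ :=
  entr p f - condEnt p f g

/-- Conditional mutual information I(f ; g | h) in bits. -/
def condMI {Ω A B D : Type*} [Fintype Ω] [Fintype A] [Fintype B] [Fintype D]
    (p : Ω → ℝ) (f : Ω → A) (g : Ω → B) (h : Ω → D) : ℝ :=
  condEnt p f h - condEnt p f (fun ω => (g ω, h ω))

/-- Pr(Z^ε ∈ B) for the random pattern Z^ε = Z^ε(ij) with Z^ε_i = Z^ε_j = 1 and the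
remaining coordinates i.i.d. Bernoulli(ε). -/
def probZ {n : ℕ} (ε : ℝ) (i j : Fin n) (B : Set (Pattern n)) : ℝ :=
  ∑ z ∈ univ.filter (fun z : Pattern n => z ∈ B ∧ z i = 1 ∧ z j = 1),
    ε ^ (univ.filter (fun k => k ≠ i ∧ k ≠ j ∧ z k = 1)).card *
      (1 - ε) ^ (univ.filter (fun k => k ≠ i ∧ k ≠ j ∧ z k = 0)).card

/-- C^{ij}_{ab}(z): codewords c ∈ C with (c_i, c_j) = (a, b) covered by z. -/
def Cab {n : ℕ} (C : Submodule (ZMod 2) (Pattern n)) (i j : Fin n) (a b : ZMod 2)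
    (z : Pattern n) : Set (Pattern n) :=
  {c | c ∈ C ∧ c i = a ∧ c j = b ∧ covers z c}

def B1 {n : ℕ} (C : Submodule (ZMod 2) (Pattern n)) (i j : Fin n) : Set (Pattern n) :=
  {z | Cab C i j 0 1 z = ∅ ∧ Cab C i j 1 0 z = ∅ ∧ Cab C i j 1 1 z = ∅}

def B2 {n : ℕ} (C : Submodule (ZMod 2) (Pattern n)) (i j : Fin n) : Set (Pattern n) :=
  {z | Cab C i j 0 1 z ≠ ∅ ∧ Cab C i j 1 0 z = ∅ ∧ Cab C i j 1 1 z = ∅}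

def B3 {n : ℕ} (C : Submodule (ZMod 2) (Pattern n)) (i j : Fin n) : Set (Pattern n) :=
  {z | Cab C i j 1 0 z ≠ ∅ ∧ Cab C i j 0 1 z = ∅ ∧ Cab C i j 1 1 z = ∅}

def B4 {n : ℕ} (C : Submodule (ZMod 2) (Pattern n)) (i j : Fin n) : Set (Pattern n) :=
  {z | Cab C i j 1 1 z ≠ ∅ ∧ Cab C i j 0 1 z = ∅ ∧ Cab C i j 1 0 z = ∅}

def B5 {n : ℕ} (C : Submodule (ZMod 2) (Pattern n)) (i j : Fin n) : Set (Pattern n) :=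
  {z | Cab C i j 0 1 z ≠ ∅ ∧ Cab C i j 1 0 z ≠ ∅ ∧ Cab C i j 1 1 z ≠ ∅}

/-- α^ε_{ij} = Pr(Z^ε ∈ B₄ | Z^ε ∈ B₂ ∪ B₃ ∪ B₄). -/
def alphaIJ {n : ℕ} (C : Submodule (ZMod 2) (Pattern n)) (ε : ℝ) (i j : Fin n) : ℝ :=
  probZ ε i j (B4 C i j) / probZ ε i j (B2 C i j ∪ B3 C i j ∪ B4 C i j)

/-- The EXIT function g(ε) = (1/n) ∑_i H(X_i | Y^ε_{∼i}). -/
def gEXIT {n : ℕ} (C : Submodule (ZMod 2) (Pattern n)) (ε : ℝ) : ℝ :=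
  (n : ℝ)⁻¹ * ∑ i : Fin n, condEnt (pmfP C ε) (fun ω => ω.1.1 i) (Ynot i)

/-- A code is 1-transitive if its permutation automorphism group acts transitively
on the coordinates. -/
def OneTransitive {n : ℕ} (C : Submodule (ZMod 2) (Pattern n)) : Prop :=
  ∀ i j : Fin n, ∃ π : Equiv.Perm (Fin n), π i = j ∧ ∀ x : Pattern n, x ∈ C ↔ x ∘ π ∈ C

/-- Real-valued indicator of a proposition. -/
def ind (P : Prop) : ℝ := if P then 1 else 0

/-- Summation over the values of two random variables. -/
lemma aux_sum_val {Ω A B : Type*} [Fintype Ω] [Fintype A] [Fintype B]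
    (p : Ω → ℝ) (f : Ω → A) (g : Ω → B) (φ : A → B → ℝ) :
    ∑ a : A, ∑ b : B, prE p {ω | f ω = a ∧ g ω = b} * φ a b = ∑ ω, p ω * φ (f ω) (g ω) := by
  have h : ∀ a b, prE p {ω | f ω = a ∧ g ω = b} * φ a b
      = ∑ ω, if f ω = a then (if g ω = b then p ω * φ a b else 0) else 0 := by
    intro a b
    unfold prE
    rw [Finset.sum_mul, Finset.sum_filter]
    refine Finset.sum_congr rfl fun ω _ => ?_
    by_cases h1 : f ω = a <;> by_cases h2 : g ω = b <;> simp [h1, h2]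
  simp_rw [h]
  calc _ = ∑ a : A, ∑ ω, ∑ b : B,
        (if f ω = a then (if g ω = b then p ω * φ a b else 0) else 0) := by
        refine Finset.sum_congr rfl fun a _ => ?_
        rw [Finset.sum_comm]
    _ = ∑ ω, ∑ a : A, ∑ b : B,
        (if f ω = a then (if g ω = b then p ω * φ a b else 0) else 0) := by
        rw [Finset.sum_comm]
    _ = _ := by
        refine Finset.sum_congr rfl fun ω _ => ?_
        rw [Finset.sum_eq_single (f ω), Finset.sum_eq_single (g ω)]
        · simp
        · intro b _ hb
          simp [Ne.symm hb]
        · simp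
        · intro a _ ha
          simp [Ne.symm ha]
        · simp

lemma prE_pos {Ω : Type*} [Fintype Ω] (p : Ω → ℝ) (hp : ∀ ω, 0 < p ω) (E : Set Ω) (ω : Ω)
    (h : ω ∈ E) : 0 < prE p E := by
  unfold prE
  exact Finset.sum_pos (fun x _ => hp x) ⟨ω, by simpa using h⟩

lemma zmod2_cases (a : ZMod 2) : a = 0 ∨ a = 1 := by
  revert a; decide

lemma zmod2_ne_zero {a : ZMod 2} (h : a ≠ 0) : a = 1 := by
  rcases zmod2_cases a with h' | h'
  · exact absurd h' h
  · exact h'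

lemma zmod2_ne_one {a : ZMod 2} (h : a ≠ 1) : a = 0 := by
  rcases zmod2_cases a with h' | h'
  · exact h'
  · exact absurd h' h

lemma condEnt_abs {Ω B : Type*} [Fintype Ω] [Fintype B] (p : Ω → ℝ) (hp : ∀ ω, 0 < p ω)
    (f : Ω → ZMod 2) (g : Ω → B) (D : Ω → Prop)
    (h0 : ∀ ω, ¬ D ω → ∀ ω', g ω' = g ω → f ω' = f ω)
    (h1 : ∀ ω, D ω → ∃ σ : Ω → Ω, (∀ ω', σ (σ ω') = ω') ∧ (∀ ω', p (σ ω') = p ω') ∧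
      ∀ ω', g ω' = g ω → g (σ ω') = g ω ∧ f (σ ω') = f ω' + 1) :
    condEnt p f g = ∑ ω, p ω * ind (D ω) := by
  unfold condEnt ind
  rw [aux_sum_val p f g (fun a b => Real.logb 2
    (prE p {ω | f ω = a ∧ g ω = b} / prE p {ω | g ω = b})), ← Finset.sum_neg_distrib]
  refine Finset.sum_congr rfl fun ω _ => ?_
  rw [← mul_neg]
  congr 1
  have hpos : 0 < prE p {ω' | g ω' = g ω} := prE_pos p hp _ ω rfl
  by_cases hD : D ω
  · rw [if_pos hD]
    obtain ⟨σ, hσ, hpσ, hg⟩ := h1 ω hD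
    have e1 : prE p {ω' | f ω' = f ω ∧ g ω' = g ω} = prE p {ω' | f ω' = f ω + 1 ∧ g ω' = g ω} := by
      unfold prE
      refine Finset.sum_nbij' σ σ ?_ ?_ ?_ ?_ ?_
      · intro a ha
        simp only [Finset.mem_filter, Finset.mem_univ, true_and, Set.mem_ofPred_eq] at ha ⊢
        exact ⟨by rw [(hg a ha.2).2, ha.1], (hg a ha.2).1⟩
      · intro a ha
        simp only [Finset.mem_filter, Finset.mem_univ, true_and, Set.mem_ofPred_eq] at ha ⊢
        refine ⟨?_, (hg a ha.2).1⟩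
        rw [(hg a ha.2).2, ha.1, add_assoc]
        have : (1 + 1 : ZMod 2) = 0 := by decide
        rw [this, add_zero]
      · intro a _; exact hσ a
      · intro a _; exact hσ a
      · intro a _; exact (hpσ a).symm
    have e2 : prE p {ω' | g ω' = g ω} = prE p {ω' | f ω' = f ω ∧ g ω' = g ω} +
        prE p {ω' | f ω' = f ω + 1 ∧ g ω' = g ω} := by
      unfold prE
      simp only [Finset.sum_filter]
      rw [← Finset.sum_add_distrib]
      refine Finset.sum_congr rfl fun x _ => ?_
      have : ∀ a b : ZMod 2, (a = b ∧ a ≠ b + 1) ∨ (a ≠ b ∧ a = b + 1) := by decide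
      simp only [Set.mem_ofPred_eq]
      rcases this (f x) (f ω) with ⟨ha, hb⟩ | ⟨ha, hb⟩ <;> by_cases hgx : g x = g ω <;>
        simp [ha, hb, hgx]
    have e3 : prE p {ω' | f ω' = f ω ∧ g ω' = g ω} / prE p {ω' | g ω' = g ω} = 2⁻¹ := by
      rw [e2, ← e1] at hpos
      rw [e2, ← e1]
      have : prE p {ω' | f ω' = f ω ∧ g ω' = g ω} ≠ 0 := by
        intro h0
        rw [h0] at hpos
        simp at hpos
      rw [div_eq_iff (by linarith)]
      ring
    rw [e3, Real.logb_inv, Real.logb_self_eq_one (by norm_num)]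
    norm_num
  · rw [if_neg hD]
    have e1 : prE p {ω' | f ω' = f ω ∧ g ω' = g ω} = prE p {ω' | g ω' = g ω} := by
      congr 1
      ext ω'
      simp only [Set.mem_ofPred_eq]
      exact ⟨fun h => h.2, fun h => ⟨h0 ω hD ω' h, h⟩⟩
    rw [e1, div_self hpos.ne']
    simp

/-- Bernoulli weight. -/
def wt (ε : ℝ) (b : ZMod 2) : ℝ := if b = 1 then ε else 1 - ε

def Wt {n : ℕ} (ε : ℝ) (z : Pattern n) : ℝ := ∏ k, wt ε (z k)

/-- Expectation under the product Bernoulli measure. -/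
def Ex {n : ℕ} (ε : ℝ) (f : Pattern n → ℝ) : ℝ := ∑ z, Wt ε z * f z

lemma pmfP_eq {n : ℕ} (C : Submodule (ZMod 2) (Pattern n)) (ε : ℝ) (ω : Samp n C) :
    pmfP C ε ω = (Nat.card C : ℝ)⁻¹ * Wt ε ω.2 := by
  unfold pmfP Wt wt
  rw [mul_assoc]
  congr 1
  rw [Finset.prod_ite, Finset.prod_const, Finset.prod_const]
  have h1 : wH ω.2 = (univ.filter (fun k => ω.2 k = 1)).card := by
    unfold wH hammingNorm
    congr 1
    ext k
    simp only [Finset.mem_filter, Finset.mem_univ, true_and]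
    exact ⟨zmod2_ne_zero, fun h => by rw [h]; exact one_ne_zero⟩
  have h2 : n - wH ω.2 = (univ.filter (fun k => ¬ ω.2 k = 1)).card := by
    have := Finset.card_filter_add_card_filter_not (s := (univ : Finset (Fin n)))
      (fun k => ω.2 k = 1)
    rw [Finset.card_univ, Fintype.card_fin] at this
    omega
  rw [h2, h1]

lemma wt_pos {ε : ℝ} (h : ε ∈ Set.Ioo (0 : ℝ) 1) (b : ZMod 2) : 0 < wt ε b := by
  unfold wt
  split_ifs
  · exact h.1
  · linarith [h.2]

lemma Wt_pos {n : ℕ} {ε : ℝ} (h : ε ∈ Set.Ioo (0 : ℝ) 1) (z : Pattern n) : 0 < Wt ε z :=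
  Finset.prod_pos fun k _ => wt_pos h (z k)

lemma add_self_code {n : ℕ} (k : Pattern n) : k + k = 0 := by
  funext l
  have : ∀ a : ZMod 2, a + a = 0 := by decide
  exact this _

lemma condEnt_code {n : ℕ} (C : Submodule (ZMod 2) (Pattern n)) {ε : ℝ}
    (hε : ε ∈ Set.Ioo (0 : ℝ) 1) {B : Type*} [Fintype B] (g : Samp n C → B) (i : Fin n)
    (V : Pattern n → Fin n → Prop)
    (hg : ∀ ω ω', g ω' = g ω ↔
      (∀ l, V ω'.2 l ↔ V ω.2 l) ∧ ∀ l, V ω.2 l → ω'.1.1 l = ω.1.1 l) :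
    condEnt (pmfP C ε) (fun ω => ω.1.1 i) g =
      Ex ε (fun z => ind (∃ k ∈ C, k i = 1 ∧ ∀ l, V z l → k l = 0)) := by
  have hcard : (0 : ℝ) < (Nat.card C : ℝ) := by
    exact_mod_cast Nat.card_pos
  rw [condEnt_abs (pmfP C ε) (fun ω => by
    rw [pmfP_eq]; exact mul_pos (inv_pos.2 hcard) (Wt_pos hε _)) _ g
    (fun ω => ∃ k ∈ C, k i = 1 ∧ ∀ l, V ω.2 l → k l = 0)]
  · unfold Ex
    rw [Fintype.sum_prod_type]
    simp only [pmfP_eq]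
    rw [Finset.sum_const, Finset.card_univ, nsmul_eq_mul, ← Nat.card_eq_fintype_card,
      Finset.mul_sum]
    refine Finset.sum_congr rfl fun z _ => ?_
    field_simp
  · intro ω hD ω' h
    by_contra hne
    apply hD
    obtain ⟨hv, hx⟩ := (hg ω ω').1 h
    refine ⟨ω'.1.1 - ω.1.1, C.sub_mem ω'.1.2 ω.1.2, ?_, ?_⟩
    · exact zmod2_ne_zero (sub_ne_zero.2 hne)
    · intro l hl
      exact sub_eq_zero.2 (hx l hl)
  · rintro ω ⟨k, hkC, hki, hk⟩
    refine ⟨fun ω' => (ω'.1 + ⟨k, hkC⟩, ω'.2), ?_, ?_, ?_⟩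
    · intro ω'
      refine Prod.ext ?_ rfl
      apply Subtype.ext
      change ω'.1.1 + k + k = ω'.1.1
      rw [add_assoc, add_self_code, add_zero]
    · intro ω'
      rw [pmfP_eq, pmfP_eq]
    · intro ω' h
      refine ⟨?_, ?_⟩
      · rw [hg] at h ⊢
        refine ⟨h.1, fun l hl => ?_⟩
        change ω'.1.1 l + k l = _
        rw [hk l hl, add_zero, h.2 l hl]
      · change ω'.1.1 i + k i = _
        rw [hki]

lemma Yout_eq_iff {n : ℕ} {C : Submodule (ZMod 2) (Pattern n)} (ω ω' : Samp n C) (l : Fin n) :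
    Yout ω' l = Yout ω l ↔ (ω'.2 l ≠ 1 ↔ ω.2 l ≠ 1) ∧ (ω.2 l ≠ 1 → ω'.1.1 l = ω.1.1 l) := by
  unfold Yout
  by_cases h1 : ω.2 l = 1 <;> by_cases h2 : ω'.2 l = 1 <;> simp [h1, h2]

lemma condEnt1 {n : ℕ} (C : Submodule (ZMod 2) (Pattern n)) {ε : ℝ}
    (hε : ε ∈ Set.Ioo (0 : ℝ) 1) (i : Fin n) :
    condEnt (pmfP C ε) (fun ω => ω.1.1 i) (Ynot i) =
      Ex ε (fun z => ind (∃ k ∈ C, k i = 1 ∧ ∀ l, (l ≠ i ∧ z l ≠ 1) → k l = 0)) := by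
  apply condEnt_code C hε (Ynot i) i (fun z l => l ≠ i ∧ z l ≠ 1)
  intro ω ω'
  have : Ynot i ω' = Ynot i ω ↔ ∀ l, l ≠ i → Yout ω' l = Yout ω l := by
    rw [funext_iff]
    exact ⟨fun h l hl => h ⟨l, hl⟩, fun h l => h l.1 l.2⟩
  rw [this]
  simp only [Yout_eq_iff]
  constructor
  · intro h
    exact ⟨fun l => ⟨fun ⟨a, b⟩ => ⟨a, (h l a).1.1 b⟩, fun ⟨a, b⟩ => ⟨a, (h l a).1.2 b⟩⟩,
      fun l hl => (h l hl.1).2 hl.2⟩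
  · rintro ⟨h1, h2⟩ l hl
    exact ⟨⟨fun a => ((h1 l).1 ⟨hl, a⟩).2, fun a => ((h1 l).2 ⟨hl, a⟩).2⟩, fun a => h2 l ⟨hl, a⟩⟩

lemma Ynot2_eq_iff {n : ℕ} {C : Submodule (ZMod 2) (Pattern n)} (i j : Fin n) (ω ω' : Samp n C) :
    Ynot2 i j ω' = Ynot2 i j ω ↔
      (∀ l, ((l ≠ i ∧ l ≠ j) ∧ ω'.2 l ≠ 1) ↔ ((l ≠ i ∧ l ≠ j) ∧ ω.2 l ≠ 1)) ∧
      ∀ l, ((l ≠ i ∧ l ≠ j) ∧ ω.2 l ≠ 1) → ω'.1.1 l = ω.1.1 l := by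
  have : Ynot2 i j ω' = Ynot2 i j ω ↔ ∀ l, (l ≠ i ∧ l ≠ j) → Yout ω' l = Yout ω l := by
    rw [funext_iff]
    exact ⟨fun h l hl => h ⟨l, hl⟩, fun h l => h l.1 l.2⟩
  rw [this]
  simp only [Yout_eq_iff]
  constructor
  · intro h
    exact ⟨fun l => ⟨fun ⟨a, b⟩ => ⟨a, (h l a).1.1 b⟩, fun ⟨a, b⟩ => ⟨a, (h l a).1.2 b⟩⟩,
      fun l hl => (h l hl.1).2 hl.2⟩
  · rintro ⟨h1, h2⟩ l hl
    exact ⟨⟨fun a => ((h1 l).1 ⟨hl, a⟩).2, fun a => ((h1 l).2 ⟨hl, a⟩).2⟩, fun a => h2 l ⟨hl, a⟩⟩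

lemma condEnt2 {n : ℕ} (C : Submodule (ZMod 2) (Pattern n)) {ε : ℝ}
    (hε : ε ∈ Set.Ioo (0 : ℝ) 1) (i j : Fin n) :
    condEnt (pmfP C ε) (fun ω => ω.1.1 i) (Ynot2 i j) =
      Ex ε (fun z => ind (∃ k ∈ C, k i = 1 ∧
        ∀ l, ((l ≠ i ∧ l ≠ j) ∧ z l ≠ 1) → k l = 0)) :=
  condEnt_code C hε (Ynot2 i j) i (fun z l => (l ≠ i ∧ l ≠ j) ∧ z l ≠ 1) (Ynot2_eq_iff i j)

lemma condEnt3 {n : ℕ} (C : Submodule (ZMod 2) (Pattern n)) {ε : ℝ}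
    (hε : ε ∈ Set.Ioo (0 : ℝ) 1) (i j : Fin n) :
    condEnt (pmfP C ε) (fun ω => ω.1.1 i) (fun ω => (ω.1.1 j, Ynot2 i j ω)) =
      Ex ε (fun z => ind (∃ k ∈ C, k i = 1 ∧
        ∀ l, (l = j ∨ (l ≠ i ∧ l ≠ j) ∧ z l ≠ 1) → k l = 0)) := by
  apply condEnt_code C hε _ i (fun z l => l = j ∨ (l ≠ i ∧ l ≠ j) ∧ z l ≠ 1)
  intro ω ω'
  rw [Prod.mk.injEq, Ynot2_eq_iff]
  constructor
  · rintro ⟨h, h1, h2⟩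
    refine ⟨fun l => or_congr Iff.rfl (h1 l), ?_⟩
    rintro l (rfl | hl)
    · exact h
    · exact h2 l hl
  · rintro ⟨h1, h2⟩
    refine ⟨h2 j (Or.inl rfl), fun l => ?_, fun l hl => h2 l (Or.inr hl)⟩
    have := h1 l
    by_cases hl : l = j
    · subst hl
      simp
    · simpa [hl] using this


lemma sum_split {n : ℕ} (F : Pattern n → ℝ) (j : Fin n) :
    ∑ z, F z = 1 / 2 * ∑ z, (F (Function.update z j 0) + F (Function.update z j 1)) := by
  have hinv : Function.Involutive (fun z : Pattern n => Function.update z j (z j + 1)) := by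
    intro z
    have : ∀ a : ZMod 2, a + 1 + 1 = a := by decide
    simp [this]
  have h1 : ∑ z, F (Function.update z j (z j + 1)) = ∑ z, F z :=
    Equiv.sum_comp (hinv.toPerm) F
  have h2 : ∀ z, F (Function.update z j 0) + F (Function.update z j 1) = F z + F (Function.update z j (z j + 1)) := by
    intro z
    rcases zmod2_cases (z j) with h | h
    · have e : Function.update z j 0 = z := by rw [← h]; exact Function.update_eq_self j z
      rw [e, h, zero_add]
    · have e : Function.update z j 1 = z := by rw [← h]; exact Function.update_eq_self j z
      have : (1 + 1 : ZMod 2) = 0 := by decide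
      rw [e, h, this, add_comm]
  simp_rw [h2]
  rw [Finset.sum_add_distrib, h1]
  ring

lemma prod_update_erase {n : ℕ} (ε : ℝ) (z : Pattern n) (j : Fin n) (b : ZMod 2)
    (s : Finset (Fin n)) (hs : j ∉ s) :
    ∏ k ∈ s, wt ε (Function.update z j b k) = ∏ k ∈ s, wt ε (z k) := by
  refine Finset.prod_congr rfl fun k hk => ?_
  rw [Function.update_of_ne]
  rintro rfl
  exact hs hk

lemma Wt_erase {n : ℕ} (ε : ℝ) (z : Pattern n) (j : Fin n) :
    Wt ε z = (∏ k ∈ univ.erase j, wt ε (z k)) * wt ε (z j) :=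
  (Finset.prod_erase_mul _ _ (Finset.mem_univ j)).symm

lemma wt_zero (ε : ℝ) : wt ε 0 = 1 - ε := by simp [wt]
lemma wt_one (ε : ℝ) : wt ε 1 = ε := by simp [wt]

lemma russo {n : ℕ} (f : Pattern n → ℝ) (ε : ℝ) :
    HasDerivAt (fun e => Ex e f)
      (∑ j, Ex ε (fun z => f (Function.update z j 1) - f (Function.update z j 0))) ε := by
  have hw : ∀ b : ZMod 2, HasDerivAt (fun e => wt e b) (if b = 1 then 1 else -1) ε := by
    intro b
    by_cases h : b = 1
    · simp only [wt, h, if_true]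
      exact hasDerivAt_id ε
    · simp only [wt, h, if_false]
      simpa using (hasDerivAt_id ε).const_sub 1
  have h1 : HasDerivAt (fun e => Ex e f)
      (∑ z : Pattern n, (∑ j, (∏ k ∈ univ.erase j, wt ε (z k)) • (if z j = 1 then (1 : ℝ) else -1)) * f z)
      ε := by
    unfold Ex Wt
    refine HasDerivAt.fun_sum fun z _ => ?_
    refine HasDerivAt.mul_const ?_ _
    exact HasDerivAt.fun_finsetProd fun k _ => hw (z k)
  convert h1 using 1
  simp_rw [Finset.sum_mul]
  rw [Finset.sum_comm]
  refine Finset.sum_congr rfl fun j _ => ?_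
  unfold Ex
  rw [sum_split _ j, sum_split (fun z : Pattern n => ((∏ k ∈ univ.erase j, wt ε (z k)) •
    (if z j = 1 then (1 : ℝ) else -1)) * f z) j]
  congr 1
  refine Finset.sum_congr rfl fun z _ => ?_
  simp only [Wt_erase ε _ j, prod_update_erase ε z j _ _ (Finset.notMem_erase j _)]
  simp [wt_zero, wt_one]
  ring

lemma sum_set_one {n : ℕ} (ε : ℝ) (j : Fin n) (T G : Pattern n → ℝ)
    (hT : ∀ z b, T (Function.update z j b) = T z) :
    ∑ z, T z * wt ε (z j) * G (Function.update z j 1) =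
      ∑ z, if z j = 1 then T z * G z else 0 := by
  rw [sum_split _ j, sum_split (fun z => if z j = 1 then T z * G z else 0) j]
  congr 1
  refine Finset.sum_congr rfl fun z _ => ?_
  simp [hT, wt_zero, wt_one]
  ring

lemma probZ_weight {n : ℕ} (ε : ℝ) (i j : Fin n) (z : Pattern n) :
    ε ^ (univ.filter (fun k => k ≠ i ∧ k ≠ j ∧ z k = 1)).card *
      (1 - ε) ^ (univ.filter (fun k => k ≠ i ∧ k ≠ j ∧ z k = 0)).card =
    ∏ k ∈ (univ.erase j).erase i, wt ε (z k) := by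
  unfold wt
  rw [Finset.prod_ite, Finset.prod_const, Finset.prod_const]
  congr 3
  · ext k
    simp [and_assoc]
  · ext k
    have : z k = 0 ↔ ¬ z k = 1 := ⟨fun h => by rw [h]; exact zero_ne_one, zmod2_ne_one⟩
    simp [and_assoc, this]

/-- Set coordinates i and j to 1. -/
def up {n : ℕ} (i j : Fin n) (z : Pattern n) : Pattern n :=
  Function.update (Function.update z i 1) j 1

lemma probZ_eq {n : ℕ} (ε : ℝ) {i j : Fin n} (hij : i ≠ j) (B : Set (Pattern n)) :
    probZ ε i j B = Ex ε (fun z => ind (up i j z ∈ B)) := by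
  have h1 : probZ ε i j B = ∑ z : Pattern n, if z i = 1 then
      (∏ k ∈ (univ.erase j).erase i, wt ε (z k)) * (if z j = 1 then ind (z ∈ B) else 0) else 0 := by
    unfold probZ
    rw [Finset.sum_filter]
    refine Finset.sum_congr rfl fun z _ => ?_
    rw [probZ_weight]
    unfold ind
    by_cases h1 : z i = 1 <;> by_cases h2 : z j = 1 <;> by_cases h3 : z ∈ B <;> simp [h1, h2, h3]
  rw [h1, ← sum_set_one ε i (fun z => ∏ k ∈ (univ.erase j).erase i, wt ε (z k))
    (fun z => if z j = 1 then ind (z ∈ B) else 0)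
    (fun z b => prod_update_erase ε z i b _ (Finset.notMem_erase i _))]
  unfold Ex up
  have h2 : ∀ z : Pattern n, (∏ k ∈ (univ.erase j).erase i, wt ε (z k)) * wt ε (z i) =
      ∏ k ∈ univ.erase j, wt ε (z k) := fun z =>
    Finset.prod_erase_mul _ _ (by simp [hij])
  simp_rw [h2, Wt_erase ε _ j, Function.update_comm hij]
  rw [sum_set_one ε j (fun z => ∏ k ∈ univ.erase j, wt ε (z k))
    (fun z => ind (Function.update z i 1 ∈ B))
    (fun z b => prod_update_erase ε z j b _ (Finset.notMem_erase j _))]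
  refine Finset.sum_congr rfl fun z _ => ?_
  rw [Function.update_of_ne hij.symm]
  split_ifs <;> simp

lemma Ex_sub {n : ℕ} (ε : ℝ) (f g : Pattern n → ℝ) :
    Ex ε (fun z => f z - g z) = Ex ε f - Ex ε g := by
  unfold Ex
  rw [← Finset.sum_sub_distrib]
  simp_rw [mul_sub]

lemma Ex_mono {n : ℕ} {ε : ℝ} (hε : ε ∈ Set.Ioo (0 : ℝ) 1) {f g : Pattern n → ℝ}
    (h : ∀ z, f z ≤ g z) : Ex ε f ≤ Ex ε g :=
  Finset.sum_le_sum fun z _ => mul_le_mul_of_nonneg_left (h z) (Wt_pos hε z).le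

lemma Ex_add {n : ℕ} (ε : ℝ) (f g : Pattern n → ℝ) :
    Ex ε (fun z => f z + g z) = Ex ε f + Ex ε g := by
  unfold Ex
  rw [← Finset.sum_add_distrib]
  simp_rw [mul_add]

lemma Ex_mul {n : ℕ} (ε : ℝ) (c : ℝ) (f : Pattern n → ℝ) :
    Ex ε (fun z => c * f z) = c * Ex ε f := by
  unfold Ex
  rw [Finset.mul_sum]
  refine Finset.sum_congr rfl fun z _ => by ring

lemma Ex_one {n : ℕ} (ε : ℝ) : Ex ε (fun _ : Pattern n => (1 : ℝ)) = 1 := by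
  unfold Ex Wt
  simp_rw [mul_one]
  have := Finset.prod_univ_sum (fun _ : Fin n => (univ : Finset (ZMod 2))) (fun _ b => wt ε b)
  rw [Fintype.piFinset_univ] at this
  rw [← this]
  apply Finset.prod_eq_one
  intro _ _
  have : ∑ b : ZMod 2, wt ε b = wt ε 0 + wt ε 1 := Fin.sum_univ_two (fun b : ZMod 2 => wt ε b)
  rw [this, wt_zero, wt_one]
  ring

/-- The bit i is undetermined by the unerased coordinates other than i. -/
def U {n : ℕ} (C : Submodule (ZMod 2) (Pattern n)) (i : Fin n) (z : Pattern n) : Prop :=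
  ∃ k ∈ C, k i = 1 ∧ ∀ l, (l ≠ i ∧ z l ≠ 1) → k l = 0

def D2 {n : ℕ} (C : Submodule (ZMod 2) (Pattern n)) (i j : Fin n) (z : Pattern n) : Prop :=
  ∃ k ∈ C, k i = 1 ∧ ∀ l, ((l ≠ i ∧ l ≠ j) ∧ z l ≠ 1) → k l = 0

def D3 {n : ℕ} (C : Submodule (ZMod 2) (Pattern n)) (i j : Fin n) (z : Pattern n) : Prop :=
  ∃ k ∈ C, k i = 1 ∧ ∀ l, (l = j ∨ (l ≠ i ∧ l ≠ j) ∧ z l ≠ 1) → k l = 0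

lemma condMI_eq {n : ℕ} (C : Submodule (ZMod 2) (Pattern n)) {ε : ℝ}
    (hε : ε ∈ Set.Ioo (0 : ℝ) 1) (i j : Fin n) :
    condMI (pmfP C ε) (fun ω => ω.1.1 i) (fun ω => ω.1.1 j) (Ynot2 i j) =
      Ex ε (fun z => ind (D2 C i j z) - ind (D3 C i j z)) := by
  unfold condMI
  rw [condEnt2 C hε, condEnt3 C hε, Ex_sub]
  rfl

lemma U_one {n : ℕ} (C : Submodule (ZMod 2) (Pattern n)) {i j : Fin n} (z : Pattern n) :
    U C i (Function.update z j 1) ↔ D2 C i j z := by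
  unfold U D2
  refine exists_congr fun k => and_congr_right fun _ => and_congr_right fun _ =>
    forall_congr' fun l => ?_
  by_cases hl : l = j
  · subst hl
    simp
  · simp [hl]

lemma U_zero {n : ℕ} (C : Submodule (ZMod 2) (Pattern n)) {i j : Fin n} (hij : i ≠ j)
    (z : Pattern n) : U C i (Function.update z j 0) ↔ D3 C i j z := by
  unfold U D3
  refine exists_congr fun k => and_congr_right fun _ => and_congr_right fun _ =>
    forall_congr' fun l => ?_
  by_cases hl : l = j
  · subst hl
    simp [hij.symm]
  · simp [hl]

lemma U_self {n : ℕ} (C : Submodule (ZMod 2) (Pattern n)) {i : Fin n} (b : ZMod 2)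
    (z : Pattern n) : U C i (Function.update z i b) ↔ U C i z := by
  unfold U
  refine exists_congr fun k => and_congr_right fun _ => and_congr_right fun _ =>
    forall_congr' fun l => ?_
  by_cases hl : l = i
  · subst hl
    simp
  · simp [hl]

lemma deriv_main {n : ℕ} (C : Submodule (ZMod 2) (Pattern n)) {ε : ℝ}
    (hε : ε ∈ Set.Ioo (0 : ℝ) 1) :
    HasDerivAt (gEXIT C)
        ((n : ℝ)⁻¹ * ∑ i : Fin n, ∑ j ∈ univ.erase i,
          condMI (pmfP C ε) (fun ω => ω.1.1 i) (fun ω => ω.1.1 j) (Ynot2 i j)) ε := by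
  have h1 : HasDerivAt (fun e => (n : ℝ)⁻¹ * ∑ i : Fin n, Ex e (fun z => ind (U C i z)))
      ((n : ℝ)⁻¹ * ∑ i : Fin n, ∑ j, Ex ε (fun z => ind (U C i (Function.update z j 1)) -
        ind (U C i (Function.update z j 0)))) ε := by
    refine HasDerivAt.const_mul _ ?_
    refine HasDerivAt.fun_sum fun i _ => ?_
    exact russo (fun z => ind (U C i z)) ε
  have h2 : (n : ℝ)⁻¹ * ∑ i : Fin n, ∑ j ∈ univ.erase i,
          condMI (pmfP C ε) (fun ω => ω.1.1 i) (fun ω => ω.1.1 j) (Ynot2 i j) =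
      (n : ℝ)⁻¹ * ∑ i : Fin n, ∑ j, Ex ε (fun z => ind (U C i (Function.update z j 1)) -
        ind (U C i (Function.update z j 0))) := by
    congr 1
    refine Finset.sum_congr rfl fun i _ => ?_
    rw [← Finset.sum_erase (s := univ) (a := i)]
    · refine Finset.sum_congr rfl fun j hj => ?_
      rw [condMI_eq C hε]
      simp_rw [U_one, U_zero C (Finset.ne_of_mem_erase hj).symm]
    · simp_rw [U_self, sub_self]
      simp [Ex]
  rw [h2]
  refine h1.congr_of_eventuallyEq ?_
  filter_upwards [Ioo_mem_nhds hε.1 hε.2] with e he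
  unfold gEXIT
  simp_rw [condEnt1 C he]
  rfl


def JJ (x : ℝ) : ℝ := x * (1 - x)

lemma JJ_nonneg {x : ℝ} (h0 : 0 ≤ x) (h1 : x ≤ 1) : 0 ≤ JJ x :=
  mul_nonneg h0 (by linarith)

lemma sqrt_lower {a d : ℝ} (hd : d ^ 2 ≤ 1) :
    JJ a + d ^ 2 ≤ Real.sqrt (JJ a ^ 2 + 2 * d ^ 2) := by
  apply Real.le_sqrt_of_sq_le
  have hJ : JJ a ≤ 1 / 4 := by
    unfold JJ
    nlinarith [sq_nonneg (a - 1 / 2)]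
  have hd0 := sq_nonneg d
  nlinarith [mul_nonneg hd0 (sub_nonneg.2 hd), mul_nonneg hd0 (sub_nonneg.2 hJ)]

lemma two_point {a b p q : ℝ} (ha0 : 0 ≤ a) (ha1 : a ≤ 1) (hb0 : 0 ≤ b) (hb1 : b ≤ 1)
    (hp : 0 ≤ p) (hq : 0 ≤ q) (hpq : q + p = 1) :
    JJ (q * a + p * b) ≤ q * Real.sqrt (JJ a ^ 2 + 2 * (max (a - b) 0) ^ 2) +
      p * Real.sqrt (JJ b ^ 2 + 2 * (max (b - a) 0) ^ 2) := by
  have sq_max : ∀ x y : ℝ, 0 ≤ x → x ≤ 1 → 0 ≤ y → y ≤ 1 → (max (x - y) 0) ^ 2 ≤ 1 := by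
    intro x y hx0 hx1 hy0 hy1
    have h1 : max (x - y) 0 ≤ 1 := max_le (by linarith) (by norm_num)
    have h2 : 0 ≤ max (x - y) 0 := le_max_right _ _
    nlinarith
  have hA := mul_le_mul_of_nonneg_left (sqrt_lower (a := a) (sq_max a b ha0 ha1 hb0 hb1)) hq
  have hB := mul_le_mul_of_nonneg_left (sqrt_lower (a := b) (sq_max b a hb0 hb1 ha0 ha1)) hp
  refine le_trans ?_ (add_le_add hA hB)
  have hq1 : q = 1 - p := by linarith
  subst hq1
  have key : JJ ((1 - p) * a + p * b) = (1 - p) * JJ a + p * JJ b + p * (1 - p) * (a - b) ^ 2 := by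
    unfold JJ; ring
  rw [key]
  rcases le_total a b with h | h
  · rw [max_eq_right (by linarith : a - b ≤ 0), max_eq_left (by linarith : 0 ≤ b - a)]
    have := mul_nonneg (mul_nonneg hp hp) (sq_nonneg (a - b))
    nlinarith
  · rw [max_eq_left (by linarith : 0 ≤ a - b), max_eq_right (by linarith : b - a ≤ 0)]
    have := mul_nonneg (mul_nonneg hq hq) (sq_nonneg (a - b))
    nlinarith

lemma minkowski {n : ℕ} {ε : ℝ} (hε : ε ∈ Set.Ioo (0 : ℝ) 1) (u v : Pattern n → ℝ) :
    Real.sqrt (Ex ε u ^ 2 + Ex ε v ^ 2) ≤ Ex ε (fun z => Real.sqrt (u z ^ 2 + v z ^ 2)) := by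
  set s := Real.sqrt (Ex ε u ^ 2 + Ex ε v ^ 2) with hs
  have hs2 : s ^ 2 = Ex ε u ^ 2 + Ex ε v ^ 2 := Real.sq_sqrt (by positivity)
  have hs0 : 0 ≤ s := Real.sqrt_nonneg _
  have h1 : Ex ε (fun z => Ex ε u * u z + Ex ε v * v z) ≤
      Ex ε (fun z => s * Real.sqrt (u z ^ 2 + v z ^ 2)) := by
    refine Ex_mono hε fun z => ?_
    rw [hs, ← Real.sqrt_mul (by positivity)]
    apply Real.le_sqrt_of_sq_le
    nlinarith [sq_nonneg (Ex ε u * v z - Ex ε v * u z)]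
  rw [Ex_add, Ex_mul, Ex_mul, Ex_mul] at h1
  rcases hs0.eq_or_lt with h | h
  · rw [← h]
    unfold Ex
    exact Finset.sum_nonneg fun z _ => mul_nonneg (Wt_pos hε z).le (Real.sqrt_nonneg _)
  · have : s * s ≤ s * Ex ε (fun z => Real.sqrt (u z ^ 2 + v z ^ 2)) := by nlinarith
    exact le_of_mul_le_mul_left this h

lemma Ex_succ {n : ℕ} (ε : ℝ) (f : Pattern (n + 1) → ℝ) :
    Ex ε f = (1 - ε) * Ex ε (fun y : Pattern n => f (Fin.cons 0 y)) +
      ε * Ex ε (fun y : Pattern n => f (Fin.cons 1 y)) := by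
  unfold Ex
  rw [← Equiv.sum_comp (Fin.consEquiv (fun _ : Fin (n + 1) => ZMod 2)), Fintype.sum_prod_type]
  have : ∀ F : ZMod 2 → ℝ, ∑ b : ZMod 2, F b = F 0 + F 1 := fun F => Fin.sum_univ_two F
  rw [this, Finset.mul_sum, Finset.mul_sum]
  congr 1
  · refine Finset.sum_congr rfl fun y _ => ?_
    simp [Fin.consEquiv, Wt, Fin.prod_univ_succ, wt_zero]
    ring
  · refine Finset.sum_congr rfl fun y _ => ?_
    simp [Fin.consEquiv, Wt, Fin.prod_univ_succ, wt_one]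
    ring

/-- One-sided squared gradient. -/
def grad {n : ℕ} (f : Pattern n → ℝ) (z : Pattern n) : ℝ :=
  ∑ i, 2 * (max (f z - f (Function.update z i (z i + 1))) 0) ^ 2

lemma grad_nonneg {n : ℕ} (f : Pattern n → ℝ) (z : Pattern n) : 0 ≤ grad f z :=
  Finset.sum_nonneg fun i _ => by positivity

lemma grad_cons {n : ℕ} (f : Pattern (n + 1) → ℝ) (b : ZMod 2) (y : Pattern n) :
    grad f (Fin.cons b y) = 2 * (max (f (Fin.cons b y) - f (Fin.cons (b + 1) y)) 0) ^ 2 +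
      grad (fun y' => f (Fin.cons b y')) y := by
  unfold grad
  rw [Fin.sum_univ_succ]
  simp [Fin.cons_update]

lemma Ex_mem {n : ℕ} {ε : ℝ} (hε : ε ∈ Set.Ioo (0 : ℝ) 1) {f : Pattern n → ℝ}
    (hf : ∀ z, 0 ≤ f z ∧ f z ≤ 1) : 0 ≤ Ex ε f ∧ Ex ε f ≤ 1 := by
  constructor
  · exact Finset.sum_nonneg fun z _ => mul_nonneg (Wt_pos hε z).le (hf z).1
  · rw [← Ex_one (n := n) ε]
    exact Ex_mono hε fun z => (hf z).2

lemma iso_step {n : ℕ} {ε : ℝ} (hε : ε ∈ Set.Ioo (0 : ℝ) 1) (f g G : Pattern n → ℝ)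
    (hf : ∀ z, 0 ≤ f z ∧ f z ≤ 1) (hG : ∀ z, 0 ≤ G z)
    (h : JJ (Ex ε f) ≤ Ex ε (fun z => Real.sqrt (JJ (f z) ^ 2 + G z))) :
    Real.sqrt (JJ (Ex ε f) ^ 2 + 2 * (max (Ex ε f - Ex ε g) 0) ^ 2) ≤
      Ex ε (fun z => Real.sqrt (JJ (f z) ^ 2 + (2 * (max (f z - g z) 0) ^ 2 + G z))) := by
  have h2 : (0 : ℝ) ≤ Real.sqrt 2 := Real.sqrt_nonneg _
  have hm := minkowski hε (fun z => Real.sqrt (JJ (f z) ^ 2 + G z))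
    (fun z => Real.sqrt 2 * max (f z - g z) 0)
  have hs : ∀ z, Real.sqrt (JJ (f z) ^ 2 + G z) ^ 2 + (Real.sqrt 2 * max (f z - g z) 0) ^ 2 =
      JJ (f z) ^ 2 + (2 * (max (f z - g z) 0) ^ 2 + G z) := by
    intro z
    rw [Real.sq_sqrt (add_nonneg (sq_nonneg _) (hG z)), mul_pow, Real.sq_sqrt (by norm_num)]
    ring
  simp_rw [hs] at hm
  refine le_trans (Real.sqrt_le_sqrt ?_) hm
  rw [Ex_mul, mul_pow, Real.sq_sqrt (by norm_num)]
  have hJ := JJ_nonneg (Ex_mem hε hf).1 (Ex_mem hε hf).2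
  have hv : max (Ex ε f - Ex ε g) 0 ≤ Ex ε (fun z => max (f z - g z) 0) := by
    apply max_le
    · rw [← Ex_sub]
      exact Ex_mono hε fun z => le_max_left _ _
    · exact Finset.sum_nonneg fun z _ => mul_nonneg (Wt_pos hε z).le (le_max_right _ _)
  have hv0 : 0 ≤ max (Ex ε f - Ex ε g) 0 := le_max_right _ _
  gcongr

lemma iso {ε : ℝ} (hε : ε ∈ Set.Ioo (0 : ℝ) 1) : ∀ (n : ℕ) (f : Pattern n → ℝ),
    (∀ z, 0 ≤ f z ∧ f z ≤ 1) →
    JJ (Ex ε f) ≤ Ex ε (fun z => Real.sqrt (JJ (f z) ^ 2 + grad f z)) := by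
  intro n
  induction n with
  | zero =>
    intro f hf
    have h0 : ∀ F : Pattern 0 → ℝ, Ex ε F = F default := by
      intro F
      simp only [Ex, Wt, Finset.univ_unique, Finset.sum_singleton, Finset.univ_eq_empty,
        Finset.prod_empty, one_mul]
      exact congrArg F (Subsingleton.elim _ _)
    rw [h0, h0]
    apply Real.le_sqrt_of_sq_le
    have := grad_nonneg f default
    linarith
  | succ n ih =>
    intro f hf
    set f0 : Pattern n → ℝ := fun y => f (Fin.cons 0 y) with hf0
    set f1 : Pattern n → ℝ := fun y => f (Fin.cons 1 y) with hf1
    have hm0 : ∀ z, 0 ≤ f0 z ∧ f0 z ≤ 1 := fun z => hf _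
    have hm1 : ∀ z, 0 ≤ f1 z ∧ f1 z ≤ 1 := fun z => hf _
    have s0 := iso_step hε f0 f1 (grad f0) hm0 (grad_nonneg f0) (ih f0 hm0)
    have s1 := iso_step hε f1 f0 (grad f1) hm1 (grad_nonneg f1) (ih f1 hm1)
    rw [Ex_succ ε f, Ex_succ ε (fun z => Real.sqrt (JJ (f z) ^ 2 + grad f z))]
    have e : (1 + 1 : ZMod 2) = 0 := by decide
    simp_rw [grad_cons, zero_add, e]
    have t := two_point (Ex_mem hε hm0).1 (Ex_mem hε hm0).2 (Ex_mem hε hm1).1 (Ex_mem hε hm1).2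
      hε.1.le (by linarith [hε.2] : 0 ≤ 1 - ε) (by ring)
    refine t.trans (add_le_add ?_ ?_)
    · exact mul_le_mul_of_nonneg_left s0 (by linarith [hε.2])
    · exact mul_le_mul_of_nonneg_left s1 hε.1.le

lemma ind_nonneg (P : Prop) : 0 ≤ ind P := by unfold ind; split_ifs <;> norm_num
lemma ind_le_one (P : Prop) : ind P ≤ 1 := by unfold ind; split_ifs <;> norm_num
lemma ind_pos {P : Prop} (h : P) : ind P = 1 := if_pos h
lemma ind_neg {P : Prop} (h : ¬ P) : ind P = 0 := if_neg h
lemma ind_mono {P Q : Prop} (h : P → Q) : ind P ≤ ind Q := by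
  by_cases hP : P
  · rw [ind_pos hP, ind_pos (h hP)]
  · rw [ind_neg hP]; exact ind_nonneg Q

/-- One-sided vertex isoperimetry. -/
lemma iso_vertex {n : ℕ} {ε : ℝ} (hε : ε ∈ Set.Ioo (0 : ℝ) 1) (A S : Pattern n → Prop)
    (h : ∀ z i, A z → ¬ A (Function.update z i (z i + 1)) → S z) :
    JJ (Ex ε (fun z => ind (A z))) ≤ Real.sqrt (2 * n) * Ex ε (fun z => ind (S z)) := by
  refine (iso hε n _ fun z => ⟨ind_nonneg _, ind_le_one _⟩).trans ?_
  rw [← Ex_mul]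
  refine Ex_mono hε fun z => ?_
  have hJ : JJ (ind (A z)) = 0 := by
    unfold JJ ind
    split_ifs <;> norm_num
  rw [hJ]
  have hm : ∀ i, max (ind (A z) - ind (A (Function.update z i (z i + 1)))) 0 ≤ ind (S z) := by
    intro i
    apply max_le _ (ind_nonneg _)
    by_cases h1 : A z
    · by_cases h2 : A (Function.update z i (z i + 1))
      · rw [ind_pos h1, ind_pos h2, sub_self]
        exact ind_nonneg _
      · rw [ind_pos (h z i h1 h2)]
        linarith [ind_le_one (A z), ind_nonneg (A (Function.update z i (z i + 1)))]
    · rw [ind_neg h1]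
      linarith [ind_nonneg (A (Function.update z i (z i + 1))), ind_nonneg (S z)]
  have hg : grad (fun z => ind (A z)) z ≤ 2 * n * ind (S z) ^ 2 := by
    unfold grad
    calc _ ≤ ∑ _i : Fin n, 2 * ind (S z) ^ 2 := by
          refine Finset.sum_le_sum fun i _ => ?_
          have h0 : 0 ≤ max (ind (A z) - ind (A (Function.update z i (z i + 1)))) 0 :=
            le_max_right _ _
          have := hm i
          gcongr
      _ = _ := by simp; ring
  calc _ ≤ Real.sqrt (2 * n * ind (S z) ^ 2) := Real.sqrt_le_sqrt (by simpa using hg)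
    _ = _ := by
      rw [Real.sqrt_mul (by positivity), Real.sqrt_sq (ind_nonneg _)]


/-- There is a codeword with prescribed values at i, j covered by z. -/
def NN {n : ℕ} (C : Submodule (ZMod 2) (Pattern n)) (i j : Fin n) (a b : ZMod 2)
    (z : Pattern n) : Prop := ∃ k ∈ C, k i = a ∧ k j = b ∧ covers z k

lemma Cab_empty {n : ℕ} (C : Submodule (ZMod 2) (Pattern n)) (i j : Fin n) (a b : ZMod 2)
    (z : Pattern n) : Cab C i j a b z = ∅ ↔ ¬ NN C i j a b z := by
  rw [Set.eq_empty_iff_forall_notMem]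
  unfold NN
  push Not
  exact ⟨fun h k h1 h2 h3 h4 => h k ⟨h1, h2, h3, h4⟩, fun h k ⟨h1, h2, h3, h4⟩ => h k h1 h2 h3 h4⟩

lemma NN_add {n : ℕ} {C : Submodule (ZMod 2) (Pattern n)} {i j : Fin n} {a b a' b' : ZMod 2}
    {z : Pattern n} (h : NN C i j a b z) (h' : NN C i j a' b' z) :
    NN C i j (a + a') (b + b') z := by
  obtain ⟨k, h1, h2, h3, h4⟩ := h
  obtain ⟨k', h1', h2', h3', h4'⟩ := h'
  refine ⟨k + k', C.add_mem h1 h1', by simp [h2, h2'], by simp [h3, h3'], fun l hl => ?_⟩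
  by_cases hk : k l = 0
  · refine h4' l fun hk' => hl ?_
    simp [hk, hk']
  · exact h4 l hk

lemma NN_rel {n : ℕ} (C : Submodule (ZMod 2) (Pattern n)) (i j : Fin n) (z : Pattern n) :
    (NN C i j 0 1 z → NN C i j 1 0 z → NN C i j 1 1 z) ∧
    (NN C i j 0 1 z → NN C i j 1 1 z → NN C i j 1 0 z) ∧
    (NN C i j 1 0 z → NN C i j 1 1 z → NN C i j 0 1 z) := by
  have e : (1 + 1 : ZMod 2) = 0 := by decide
  refine ⟨fun a b => ?_, fun a b => ?_, fun a b => ?_⟩ <;> simpa [e] using NN_add a b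

lemma covers_up {n : ℕ} (i j : Fin n) (z k : Pattern n) :
    covers (up i j z) k ↔ ∀ l, ((l ≠ i ∧ l ≠ j) ∧ z l ≠ 1) → k l = 0 := by
  unfold covers up
  refine forall_congr' fun l => ?_
  by_cases hj : l = j
  · subst hj; simp
  · by_cases hi : l = i
    · subst hi; simp [Function.update_of_ne hj]
    · rw [Function.update_of_ne hj, Function.update_of_ne hi]
      have : z l ≠ 1 ↔ z l = 0 := ⟨zmod2_ne_one, fun h => by rw [h]; exact zero_ne_one⟩
      simp only [ne_eq, hi, hj, not_false_eq_true, and_self, true_and]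
      rw [← ne_eq (z l) 1, this]
      tauto

lemma D2_iff {n : ℕ} (C : Submodule (ZMod 2) (Pattern n)) (i j : Fin n) (z : Pattern n) :
    D2 C i j z ↔ NN C i j 1 0 (up i j z) ∨ NN C i j 1 1 (up i j z) := by
  unfold D2 NN
  simp_rw [covers_up]
  constructor
  · rintro ⟨k, h1, h2, h3⟩
    rcases zmod2_cases (k j) with h | h
    · exact Or.inl ⟨k, h1, h2, h, h3⟩
    · exact Or.inr ⟨k, h1, h2, h, h3⟩
  · rintro (⟨k, h1, h2, _, h3⟩ | ⟨k, h1, h2, _, h3⟩) <;> exact ⟨k, h1, h2, h3⟩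

lemma D3_iff {n : ℕ} (C : Submodule (ZMod 2) (Pattern n)) (i j : Fin n) (z : Pattern n) :
    D3 C i j z ↔ NN C i j 1 0 (up i j z) := by
  unfold D3 NN
  simp_rw [covers_up]
  constructor
  · rintro ⟨k, h1, h2, h3⟩
    exact ⟨k, h1, h2, h3 j (Or.inl rfl), fun l hl => h3 l (Or.inr hl)⟩
  · rintro ⟨k, h1, h2, h, h3⟩
    refine ⟨k, h1, h2, ?_⟩
    rintro l (rfl | hl)
    · exact h
    · exact h3 l hl

lemma condMI_probZ {n : ℕ} (C : Submodule (ZMod 2) (Pattern n)) {ε : ℝ}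
    (hε : ε ∈ Set.Ioo (0 : ℝ) 1) {i j : Fin n} (hij : i ≠ j) :
    condMI (pmfP C ε) (fun ω => ω.1.1 i) (fun ω => ω.1.1 j) (Ynot2 i j) =
      probZ ε i j (B4 C i j) := by
  rw [condMI_eq C hε, probZ_eq ε hij]
  congr 1
  funext z
  have hB : up i j z ∈ B4 C i j ↔ NN C i j 1 1 (up i j z) ∧ ¬ NN C i j 0 1 (up i j z) ∧
      ¬ NN C i j 1 0 (up i j z) := by
    unfold B4
    rw [Set.mem_ofPred_eq, ne_eq, Cab_empty, Cab_empty, Cab_empty, not_not]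
  rw [D2_iff, D3_iff, hB]
  have hr := NN_rel C i j (up i j z)
  by_cases h1 : NN C i j 1 0 (up i j z)
  · rw [ind_pos (Or.inl h1), ind_pos h1, ind_neg (fun h => h.2.2 h1), sub_self]
  · rw [ind_neg h1, sub_zero]
    congr 1
    apply propext
    tauto

lemma Ex_perm {n : ℕ} (ε : ℝ) (f : Pattern n → ℝ) (π : Equiv.Perm (Fin n)) :
    Ex ε (fun z => f (z ∘ π)) = Ex ε f := by
  unfold Ex
  rw [← Equiv.sum_comp (Equiv.arrowCongr π.symm (Equiv.refl (ZMod 2))) (fun z => Wt ε z * f z)]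
  refine Finset.sum_congr rfl fun z _ => ?_
  have : (Equiv.arrowCongr π.symm (Equiv.refl (ZMod 2))) z = z ∘ π := by
    funext l
    simp [Equiv.arrowCongr]
  rw [this]
  congr 1
  unfold Wt
  exact (Equiv.prod_comp π (fun k => wt ε (z k))).symm

lemma U_perm {n : ℕ} (C : Submodule (ZMod 2) (Pattern n)) (ε : ℝ) (h : OneTransitive C)
    (i j : Fin n) : Ex ε (fun z => ind (U C i z)) = Ex ε (fun z => ind (U C j z)) := by
  obtain ⟨π, hπ, hC⟩ := h i j
  rw [← Ex_perm ε (fun z => ind (U C i z)) π]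
  congr 1
  funext z
  congr 1
  apply propext
  unfold U
  constructor
  · rintro ⟨k, h1, h2, h3⟩
    refine ⟨k ∘ π.symm, ?_, ?_, ?_⟩
    · rw [hC]
      convert h1 using 1
      funext l
      simp
    · rw [← hπ]
      simpa using h2
    · rintro l ⟨hl, hz⟩
      refine h3 (π.symm l) ⟨?_, by simpa using hz⟩
      rintro rfl
      apply hl
      simpa using hπ
  · rintro ⟨k, h1, h2, h3⟩
    refine ⟨k ∘ π, (hC k).1 h1, by simpa [hπ] using h2, ?_⟩
    rintro l ⟨hl, hz⟩
    refine h3 (π l) ⟨?_, hz⟩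
    rintro h'
    apply hl
    exact π.injective (h'.trans hπ.symm)

lemma gEXIT_eq {n : ℕ} (C : Submodule (ZMod 2) (Pattern n)) {ε : ℝ}
    (hε : ε ∈ Set.Ioo (0 : ℝ) 1) (h : OneTransitive C) (i : Fin n) :
    gEXIT C ε = Ex ε (fun z => ind (U C i z)) := by
  unfold gEXIT
  simp_rw [condEnt1 C hε]
  have : ∀ k ∈ (univ : Finset (Fin n)), Ex ε (fun z => ind (∃ c ∈ C, c k = 1 ∧
      ∀ l, (l ≠ k ∧ z l ≠ 1) → c l = 0)) = Ex ε (fun z => ind (U C i z)) :=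
    fun k _ => U_perm C ε h k i
  rw [Finset.sum_congr rfl this, Finset.sum_const, Finset.card_univ, Fintype.card_fin, nsmul_eq_mul]
  have hn : (n : ℝ) ≠ 0 := by
    have := i.pos
    positivity
  field_simp

lemma U_mono {n : ℕ} (C : Submodule (ZMod 2) (Pattern n)) (i j : Fin n)
    (z : Pattern n) : (U C i z → D2 C i j z) ∧ (D3 C i j z → U C i z) := by
  constructor
  · rintro ⟨k, h1, h2, h3⟩
    exact ⟨k, h1, h2, fun l hl => h3 l ⟨hl.1.1, hl.2⟩⟩
  · rintro ⟨k, h1, h2, h3⟩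
    refine ⟨k, h1, h2, fun l hl => h3 l ?_⟩
    by_cases h : l = j
    · exact Or.inl h
    · exact Or.inr ⟨⟨hl.1, h⟩, hl.2⟩

lemma NN_flip {n : ℕ} {i j : Fin n} {z k : Pattern n}
    (l : Fin n) (b : ZMod 2) (hk : covers (up i j z) k) (hl : k l = 0) :
    covers (up i j (Function.update z l b)) k := by
  rw [covers_up] at hk ⊢
  intro m hm
  by_cases h : m = l
  · rw [h, hl]
  · rw [Function.update_of_ne h] at hm
    exact hk m hm

lemma prop_aux (a b c : Prop) (h : (a → b → c) ∧ (a → c → b) ∧ (b → c → a)) :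
    ((a ∧ ¬ b ∧ ¬ c) ∨ (b ∧ ¬ a ∧ ¬ c) ∨ (c ∧ ¬ a ∧ ¬ b)) ↔
      (a ∨ b ∨ c) ∧ ¬ (a ∧ b ∧ c) := by
  by_cases ha : a <;> by_cases hb : b <;> by_cases hc : c <;> simp_all

lemma sep_bound {n : ℕ} (C : Submodule (ZMod 2) (Pattern n)) {ε δ : ℝ}
    (hε : ε ∈ Set.Ioo (0 : ℝ) 1) (hδ : δ ∈ Set.Ioo (0 : ℝ) (1 / 2)) (h : OneTransitive C)
    (hg : gEXIT C ε ∈ Set.Ioo δ (1 - δ)) {i j : Fin n} (hij : i ≠ j) :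
    δ ^ 2 / 4 / Real.sqrt n ≤ probZ ε i j (B2 C i j ∪ B3 C i j ∪ B4 C i j) := by
  rw [probZ_eq ε hij]
  set S : Pattern n → Prop := fun z => up i j z ∈ B2 C i j ∪ B3 C i j ∪ B4 C i j with hS
  set N : ZMod 2 → ZMod 2 → Pattern n → Prop := fun a b z => NN C i j a b (up i j z) with hN
  set A : Pattern n → Prop := fun z => N 0 1 z ∨ N 1 0 z ∨ N 1 1 z with hA
  have hr : ∀ z, (N 0 1 z → N 1 0 z → N 1 1 z) ∧ (N 0 1 z → N 1 1 z → N 1 0 z) ∧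
    (N 1 0 z → N 1 1 z → N 0 1 z) := fun z => NN_rel C i j (up i j z)
  have hSiff : ∀ z, S z ↔ A z ∧ ¬ (N 0 1 z ∧ N 1 0 z ∧ N 1 1 z) := by
    intro z
    have : S z ↔ (N 0 1 z ∧ ¬ N 1 0 z ∧ ¬ N 1 1 z) ∨ (N 1 0 z ∧ ¬ N 0 1 z ∧ ¬ N 1 1 z) ∨
        (N 1 1 z ∧ ¬ N 0 1 z ∧ ¬ N 1 0 z) := by
      simp only [hS, hN, B2, B3, B4, Set.mem_union, Set.mem_ofPred_eq, ne_eq, Cab_empty, not_not]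
      rw [or_assoc]
    rw [this]
    exact prop_aux _ _ _ (hr z)
  have hsep : ∀ z l, A z → ¬ A (Function.update z l (z l + 1)) → S z := by
    intro z l h1 h2
    rw [hSiff]
    refine ⟨h1, ?_⟩
    rintro ⟨⟨k, ka, kb, kc, kd⟩, ⟨k', ka', kb', kc', kd'⟩, -⟩
    apply h2
    by_cases hk : k l = 0
    · exact Or.inl ⟨k, ka, kb, kc, NN_flip l _ kd hk⟩
    by_cases hk' : k' l = 0
    · exact Or.inr (Or.inl ⟨k', ka', kb', kc', NN_flip l _ kd' hk'⟩)
    have e : (1 + 1 : ZMod 2) = 0 := by decide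
    refine Or.inr (Or.inr ⟨k + k', C.add_mem ka ka', by simp [kb, kb'], by simp [kc, kc'],
      NN_flip l _ ?_ ?_⟩)
    · intro m hm
      by_cases hkm : k m = 0
      · refine kd' m fun hk'm => hm ?_
        simp [hkm, hk'm]
      · exact kd m hkm
    · simp [zmod2_ne_zero hk, zmod2_ne_zero hk', e]
  have hiso := iso_vertex hε A S hsep
  set s := Ex ε (fun z => ind (S z)) with hs
  set m := Ex ε (fun z => ind (A z)) with hm
  have hgi := gEXIT_eq C hε h i
  have hm1 : δ < m := by
    have : Ex ε (fun z => ind (U C i z)) ≤ m := Ex_mono hε fun z => ind_mono fun hu => by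
      have := (D2_iff C i j z).1 ((U_mono C i j z).1 hu)
      exact Or.inr this
    linarith [hg.1]
  have hm2 : m - s < 1 - δ := by
    have : m - s ≤ Ex ε (fun z => ind (U C i z)) := by
      rw [hm, hs, ← Ex_sub]
      refine Ex_mono hε fun z => ?_
      by_cases hu : U C i z
      · rw [ind_pos hu]
        linarith [ind_le_one (A z), ind_nonneg (S z)]
      · have h3 : ¬ N 1 0 z := fun h => hu ((U_mono C i j z).2 ((D3_iff C i j z).2 h))
        have : A z → S z := fun ha => (hSiff z).2 ⟨ha, fun hh => h3 hh.2.1⟩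
        linarith [ind_mono this, ind_nonneg (U C i z)]
    linarith [hg.2]
  have hn1 : (1 : ℝ) ≤ n := by exact_mod_cast i.pos
  have hsn : 1 ≤ Real.sqrt n := Real.one_le_sqrt.2 hn1
  rw [div_le_iff₀ (by linarith)]
  have hδ0 := hδ.1
  have hδ1 := hδ.2
  by_cases hc : δ / 2 ≤ s
  · nlinarith
  · push Not at hc
    have hJ : δ * (δ / 2) ≤ JJ m := by
      unfold JJ
      exact mul_le_mul hm1.le (by linarith) (by linarith) (by linarith)
    rw [Real.sqrt_mul (by norm_num)] at hiso
    have h2 : Real.sqrt 2 ≤ 2 := by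
      rw [Real.sqrt_le_left (by norm_num)]; norm_num
    have hs0 : 0 ≤ s := Finset.sum_nonneg fun z _ => mul_nonneg (Wt_pos hε z).le (ind_nonneg _)
    have h3 : 0 ≤ Real.sqrt n * s := by positivity
    nlinarith [mul_le_mul_of_nonneg_right h2 h3]

lemma part_two {n : ℕ} (C : Submodule (ZMod 2) (Pattern n)) {ε δ : ℝ}
    (hε : ε ∈ Set.Ioo (0 : ℝ) 1) (hδ : δ ∈ Set.Ioo (0 : ℝ) (1 / 2)) (h : OneTransitive C)
    (hg : gEXIT C ε ∈ Set.Ioo δ (1 - δ)) :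
    deriv (gEXIT C) ε ≥ δ ^ 2 / 4 / (n : ℝ) ^ ((3 : ℝ) / 2) *
      ∑ i : Fin n, ∑ j ∈ univ.erase i, alphaIJ C ε i j := by
  rw [(deriv_main C hε).deriv, ge_iff_le]
  rcases Nat.eq_zero_or_pos n with rfl | hn
  · simp
  have hn0 : (0 : ℝ) < n := by exact_mod_cast hn
  have hpow : (n : ℝ) ^ ((3 : ℝ) / 2) = n * Real.sqrt n := by
    rw [Real.sqrt_eq_rpow, show (3 : ℝ) / 2 = 1 + 1 / 2 by norm_num, Real.rpow_add hn0,
      Real.rpow_one]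
  have hsq : 0 < Real.sqrt n := Real.sqrt_pos.2 hn0
  have e : δ ^ 2 / 4 / (n : ℝ) ^ ((3 : ℝ) / 2) = (n : ℝ)⁻¹ * (δ ^ 2 / 4 / Real.sqrt n) := by
    rw [hpow]
    field_simp
  rw [e, mul_assoc]
  refine mul_le_mul_of_nonneg_left ?_ (by positivity)
  rw [Finset.mul_sum]
  refine Finset.sum_le_sum fun i _ => ?_
  rw [Finset.mul_sum]
  refine Finset.sum_le_sum fun j hj => ?_
  have hij : i ≠ j := (Finset.ne_of_mem_erase hj).symm
  rw [condMI_probZ C hε hij]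
  have hb := sep_bound C hε hδ h hg hij
  have hδ0 := hδ.1
  have hpos : 0 < probZ ε i j (B2 C i j ∪ B3 C i j ∪ B4 C i j) :=
    lt_of_lt_of_le (by positivity) hb
  have h4 : 0 ≤ probZ ε i j (B4 C i j) := by
    rw [probZ_eq ε hij]
    exact Finset.sum_nonneg fun z _ => mul_nonneg (Wt_pos hε z).le (ind_nonneg _)
  unfold alphaIJ
  rw [← mul_div_assoc, div_le_iff₀ hpos, mul_comm]
  exact mul_le_mul_of_nonneg_left hb h4

theorem EXIT_derivative_and_transitive_bound :
    (∀ (n : ℕ) (C : Submodule (ZMod 2) (Pattern n)), ∀ ε ∈ Set.Ioo (0 : ℝ) 1,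
      HasDerivAt (gEXIT C)
        ((n : ℝ)⁻¹ * ∑ i : Fin n, ∑ j ∈ univ.erase i,
          condMI (pmfP C ε) (fun ω => ω.1.1 i) (fun ω => ω.1.1 j) (Ynot2 i j)) ε) ∧
    ∃ c : ℝ → ℝ → ℝ,
      (∀ δ ε : ℝ, δ ∈ Set.Ioo (0 : ℝ) (1 / 2) → ε ∈ Set.Ioo (0 : ℝ) 1 → 0 < c δ ε) ∧
      (∀ δ₀ ε₀ ε₁ : ℝ, 0 < δ₀ → 0 < ε₀ → ε₁ < 1 →
        ∃ m : ℝ, 0 < m ∧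
          ∀ δ ε : ℝ, δ₀ ≤ δ → δ < 1 / 2 → ε₀ ≤ ε → ε ≤ ε₁ → m ≤ c δ ε) ∧
      ∀ (n : ℕ) (C : Submodule (ZMod 2) (Pattern n)), OneTransitive C →
        ∀ δ ε : ℝ, δ ∈ Set.Ioo (0 : ℝ) (1 / 2) → ε ∈ Set.Ioo (0 : ℝ) 1 →
          gEXIT C ε ∈ Set.Ioo δ (1 - δ) →
          deriv (gEXIT C) ε ≥
            c δ ε / (n : ℝ) ^ ((3 : ℝ) / 2) *
              ∑ i : Fin n, ∑ j ∈ univ.erase i, alphaIJ C ε i j := by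
  refine ⟨fun n C ε hε => deriv_main C hε, fun δ _ => δ ^ 2 / 4, ?_, ?_, ?_⟩
  · intro δ ε hδ _
    have := hδ.1
    positivity
  · intro δ₀ ε₀ ε₁ h _ _
    refine ⟨δ₀ ^ 2 / 4, by positivity, fun δ ε h1 _ _ _ => ?_⟩
    change δ₀ ^ 2 / 4 ≤ δ ^ 2 / 4
    gcongr
  · intro n C h δ ε hδ hε hg
    exact part_two C hε hδ h hg

end
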